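/- arXiv:1407.4316 — 4 statements merged into one kernel-verified Lean document; each statement's English description precedes it below -/
import Mathlib

section
/- Let R be a commutative ring, n ≥ 1, and A, B ∈ M_n(R) arbitrary square matrices. Then the characteristic polynomial of the 2n×2n block matrix M = [[0, A],[B, 0]] (zero diagonal blocks, A in the upper-right block, B in the lower-left block) satisfies χ_M(X) = χ_{A·B}(X²); that is, the characteristic polynomial of M equals the composition of the characteristic polynomial of A·B with the polynomial X². -/
open Polynomial in
/-- Composing `M.charpoly` with `p` evaluates `det (X • 1 - M)` at `X = p`. -/
theorem Matrix.charpoly_comp_eq_det {R m : Type*} [CommRing R] [Fintype m] [DecidableEq m]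
    (M : Matrix m m R) (p : R[X]) :
    M.charpoly.comp p = (Matrix.scalar m p - M.map C).det := by
  rw [Matrix.charpoly, ← coe_compRingHom_apply, RingHom.map_det]
  congr 1
  ext1 i j
  by_cases h : i = j
  · subst h
    simp
  · simp [h]

open Polynomial in
/-- The block matrix identity `[[X, -A], [-B, X]] * [[X, 0], [B, 1]] = [[X² - AB, -A], [0, X]]`. -/
theorem Matrix.charmatrix_fromBlocks_zero_mul {R m : Type*} [CommRing R] [Fintype m]
    [DecidableEq m] (A B : Matrix m m R) :
    (Matrix.fromBlocks 0 A B 0).charmatrix *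
        Matrix.fromBlocks (Matrix.scalar m (X : R[X])) 0 (B.map C) 1 =
      Matrix.fromBlocks (Matrix.scalar m (X ^ 2 : R[X]) - (A * B).map C) (-A.map C) 0
        (Matrix.scalar m (X : R[X])) := by
  have hcomm : B.map C * Matrix.scalar m (X : R[X]) = Matrix.scalar m (X : R[X]) * B.map C :=
    (Matrix.scalar_commute X (fun r => Commute.all X r) (B.map C)).eq.symm
  have hzero : (0 : Matrix m m R).charmatrix = Matrix.scalar m (X : R[X]) := by
    simp [Matrix.charmatrix]
  rw [Matrix.charmatrix_fromBlocks, Matrix.fromBlocks_multiply, hzero, Matrix.neg_mul,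
    Matrix.neg_mul, Matrix.neg_mul (B.map C), hcomm, neg_add_cancel, Matrix.map_mul,
    ← sub_eq_add_neg, ← map_mul, ← sq]
  simp

/-- The characteristic polynomial of the block matrix `[[0, A],[B, 0]]` equals the
characteristic polynomial of `A * B` composed with `X ^ 2`. -/
theorem stmt_0 {R : Type*} [CommRing R] {n : ℕ} (hn : 1 ≤ n)
    (A B : Matrix (Fin n) (Fin n) R) :
    (Matrix.fromBlocks 0 A B 0).charpoly = (A * B).charpoly.comp (Polynomial.X ^ 2) := by
  have h := congrArg Matrix.det (Matrix.charmatrix_fromBlocks_zero_mul A B)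
  rw [Matrix.det_mul, Matrix.det_fromBlocks_zero₁₂, Matrix.det_fromBlocks_zero₂₁, Matrix.det_one,
    mul_one, ← Matrix.charpoly_comp_eq_det] at h
  have hdet : (Matrix.scalar (Fin n) (Polynomial.X : Polynomial R)).det = Polynomial.X ^ n := by
    simp
  rw [hdet] at h
  exact (Polynomial.monic_X_pow n).isRegular.right h
end

section
/- Let F be a field of characteristic zero, n ≥ 1, and g ∈ M_n(F) an invertible matrix. Then g is semisimple if and only if g² is semisimple. -/
/-- A square matrix over a field is semisimple if the linear endomorphism it induces is
semisimple. -/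
def Matrix.IsSemisimple {F : Type*} [Field F] {n : ℕ} (g : Matrix (Fin n) (Fin n) F) : Prop :=
  Module.End.IsSemisimple (Matrix.toLin' g)

/-- If `p` is separable with nonzero constant term and `k` is nonzero in the field, then
`p (X ^ k)` is separable. -/
theorem Polynomial.Separable.expand_of_coeff_zero_ne_zero {F : Type*} [Field F]
    {p : Polynomial F} (hp : p.Separable) (h0 : p.coeff 0 ≠ 0) {k : ℕ} (hk : (k : F) ≠ 0) :
    (Polynomial.expand F k p).Separable := by
  have hkpos : 0 < k := Nat.pos_of_ne_zero fun h => hk (by simp [h])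
  have hX : IsCoprime (Polynomial.expand F k p) Polynomial.X := by
    refine (Polynomial.irreducible_X.coprime_iff_not_dvd.mpr fun h => h0 ?_).symm
    simpa [Polynomial.X_dvd_iff, Polynomial.coeff_expand hkpos] using h
  have hkC : IsUnit (k : Polynomial F) := by
    simpa using Polynomial.isUnit_C.mpr (isUnit_iff_ne_zero.mpr hk)
  have hexp : IsCoprime (Polynomial.expand F k p)
      (Polynomial.expand F k (Polynomial.derivative p)) :=
    IsCoprime.map hp (Polynomial.expand F k).toRingHom
  rw [Polynomial.Separable, Polynomial.derivative_expand]
  refine IsCoprime.mul_right hexp (IsCoprime.mul_right ?_ hX.pow_right)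
  exact isCoprime_one_right.of_isCoprime_of_dvd_right (isUnit_iff_dvd_one.mp hkC)

/-- Over a perfect field, an invertible endomorphism is semisimple as soon as its `k`-th power is,
for `k` nonzero in the field. -/
theorem Module.End.IsSemisimple.of_pow {F V : Type*} [Field F] [PerfectField F] [AddCommGroup V]
    [Module F V] [FiniteDimensional F V] {f : Module.End F V} (hf : IsUnit f) {k : ℕ}
    (hk : (k : F) ≠ 0) (h : (f ^ k).IsSemisimple) : f.IsSemisimple := by
  have h0 : (minpoly F (f ^ k)).coeff 0 ≠ 0 := by
    intro h0
    have hroot : (minpoly F (f ^ k)).IsRoot 0 := by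
      rwa [Polynomial.IsRoot, ← Polynomial.coeff_zero_eq_eval_zero]
    exact spectrum.zero_notMem F (hf.pow k)
      (Module.End.hasEigenvalue_of_isRoot hroot).mem_spectrum
  have hsep := PerfectField.separable_iff_squarefree.mpr h.minpoly_squarefree
  refine Module.End.isSemisimple_of_squarefree_aeval_eq_zero
    (hsep.expand_of_coeff_zero_ne_zero h0 hk).squarefree ?_
  rw [Polynomial.expand_aeval, minpoly.aeval]

/-- Over a field of characteristic zero, an invertible matrix `g` is semisimple
if and only if `g ^ 2` is semisimple. -/
theorem stmt_1 {F : Type*} [Field F] [CharZero F] {n : ℕ} (hn : 1 ≤ n)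
    (g : Matrix (Fin n) (Fin n) F) (hg : IsUnit g) :
    g.IsSemisimple ↔ (g ^ 2).IsSemisimple := by
  rw [Matrix.IsSemisimple, Matrix.IsSemisimple, Matrix.toLin'_pow]
  exact ⟨fun h => h.pow 2, fun h => h.of_pow (hg.map Matrix.toLinAlgEquiv') (by simp)⟩
end

section
/- Let F be a field of characteristic zero and P ∈ F[X] a polynomial with P(0) ≠ 0. Then the polynomial P(X²) (the composition of P with X²) is squarefree if and only if P is squarefree. -/
open Polynomial in
/-- If `n` is invertible in the field and `P(0) ≠ 0`, then `P(Xⁿ)` is separable if and only if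
`P` is. -/
theorem separable_expand_iff {F : Type*} [Field F] {n : ℕ} (hn : (n : F) ≠ 0) {P : F[X]}
    (h0 : P.eval 0 ≠ 0) : (expand F n P).Separable ↔ P.Separable := by
  have hn' : n ≠ 0 := by
    rintro rfl
    simp at hn
  have hX : IsCoprime (expand F n P) X := by
    refine ((irreducible_X (R := F)).coprime_iff_not_dvd.2 fun h => h0 ?_).symm
    rw [X_dvd_iff, coeff_zero_eq_eval_zero, expand_eval, zero_pow hn'] at h
    exact h
  have hunit : IsUnit (n : F[X]) := by
    simpa using isUnit_C.2 hn.isUnit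
  have hcop : IsCoprime (expand F n P) ((n : F[X]) * X ^ (n - 1)) :=
    (isCoprime_mul_unit_left_right hunit _ _).2 hX.pow_right
  rw [separable_def, separable_def, derivative_expand, IsCoprime.mul_right_iff,
    isCoprime_expand hn', and_iff_left hcop]

/-- Over a field of characteristic zero, if `P(0) ≠ 0` then `P(X²)` is squarefree
if and only if `P` is squarefree. -/
theorem stmt_4 {F : Type*} [Field F] [CharZero F] (P : Polynomial F)
    (h0 : P.eval 0 ≠ 0) :
    Squarefree (P.comp (Polynomial.X ^ 2)) ↔ Squarefree P := by
  rw [← Polynomial.expand_eq_comp_X_pow, ← PerfectField.separable_iff_squarefree,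
    ← PerfectField.separable_iff_squarefree]
  exact separable_expand_iff (by norm_num) h0
end

section
/- Let F be a nontrivially normed field (a field with a multiplicative norm admitting an element x with |x| > 1), γ ∈ M_n(F) a diagonal matrix, and N ∈ M_n(F) a nilpotent matrix commuting with γ. Then γ lies in the topological closure of the conjugation orbit {g(γ + N)g⁻¹ : g ∈ GL_n(F)} in M_n(F). -/
open Filter Topology

/-- If a semisimple endomorphism `f` commutes with `g`, then there is an idempotent `p` commuting
with `f` whose range is the kernel of `g`. -/
theorem Module.End.IsSemisimple.exists_isIdempotentElem_range_eq_ker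
    {R M : Type*} [CommRing R] [AddCommGroup M] [Module R M] {f g : Module.End R M}
    (hf : f.IsSemisimple) (hfg : Commute g f) :
    ∃ p : Module.End R M, IsIdempotentElem p ∧ Commute p f ∧
      LinearMap.range p = LinearMap.ker g := by
  have hker : LinearMap.ker g ∈ Module.End.invtSubmodule f := by
    intro x hx
    have h : g (f x) = f (g x) := LinearMap.congr_fun hfg.eq x
    rw [LinearMap.mem_ker] at hx
    simp [h, hx]
  obtain ⟨q, hq, hc⟩ := Module.End.isSemisimple_iff.mp hf _ hker
  have hp := Submodule.isIdempotentElem_projection hc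
  refine ⟨(LinearMap.ker g).projection q hc, hp, ?_, Submodule.range_projection hc⟩
  rw [LinearMap.IsIdempotentElem.commute_iff hp, Submodule.range_projection,
    Submodule.ker_projection]
  exact ⟨hker, hq⟩

namespace Matrix

variable {ι K : Type*} [Fintype ι] [DecidableEq ι]

theorem isSemisimple_toLinAlgEquiv'_diagonal [Field K] (d : ι → K) :
    Module.End.IsSemisimple (toLinAlgEquiv' (diagonal d)) := by
  classical
  let p : Polynomial K := ∏ c ∈ Finset.univ.image d, (Polynomial.X - Polynomial.C c)
  have hp : Squarefree p :=
    (Polynomial.separable_prod_X_sub_C_iff'.mpr fun _ _ _ _ h => h).squarefree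
  refine Module.End.isSemisimple_of_squarefree_aeval_eq_zero hp ?_
  have hd : Polynomial.aeval d p = 0 := by
    funext i
    rw [Polynomial.aeval_fn_apply, Pi.zero_apply, Polynomial.aeval_def, Polynomial.eval₂_finsetProd]
    exact Finset.prod_eq_zero (Finset.mem_image_of_mem d (Finset.mem_univ i)) (by simp)
  have h : Polynomial.aeval (diagonal d) p = 0 := by
    rw [← diagonalAlgHom_apply K d, Polynomial.aeval_algHom_apply, hd, map_zero]
  rw [Polynomial.aeval_algHom_apply, h, map_zero]

/-- A matrix commuting with a diagonal matrix has its kernel cut out by an idempotent commuting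
with that diagonal matrix. -/
theorem exists_isIdempotentElem_commute_diagonal [Field K] {d : ι → K} {N : Matrix ι ι K}
    (hN : Commute N (diagonal d)) :
    ∃ P : Matrix ι ι K, IsIdempotentElem P ∧ Commute P (diagonal d) ∧ N * P = 0 ∧
      ∀ M : Matrix ι ι K, N * M = 0 → P * M = M := by
  let e : Matrix ι ι K ≃ₐ[K] Module.End K (ι → K) := toLinAlgEquiv'
  obtain ⟨p, hp, hpd, hr⟩ :=
    Module.End.IsSemisimple.exists_isIdempotentElem_range_eq_ker
      (isSemisimple_toLinAlgEquiv'_diagonal d) (hN.map e)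
  refine ⟨e.symm p, hp.map e.symm, by simpa [e] using hpd.map e.symm, ?_, fun M hM => ?_⟩
  · apply e.injective
    rw [map_mul, e.apply_symm_apply, map_zero]
    exact LinearMap.range_le_ker_iff.mp hr.le
  · apply e.injective
    rw [map_mul, e.apply_symm_apply]
    refine LinearMap.ext fun x => ?_
    have hx : e M x ∈ LinearMap.range p := by
      rw [hr, LinearMap.mem_ker, ← Module.End.mul_apply, ← map_mul, hM, map_zero,
        LinearMap.zero_apply]
    obtain ⟨y, hy⟩ := hx
    rw [Module.End.mul_apply, ← hy, ← Module.End.mul_apply, hp.eq]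

/-- The conjugation orbit of a matrix. -/
def conjOrbit [CommRing K] (X : Matrix ι ι K) : Set (Matrix ι ι K) :=
  {Y | ∃ g : GL ι K, Y = (g : Matrix ι ι K) * X * ((g⁻¹ : GL ι K) : Matrix ι ι K)}

theorem conj_mem_conjOrbit [CommRing K] {X Y : Matrix ι ι K} (hY : Y ∈ conjOrbit X) (g : GL ι K) :
    (g : Matrix ι ι K) * Y * ((g⁻¹ : GL ι K) : Matrix ι ι K) ∈ conjOrbit X := by
  obtain ⟨h, rfl⟩ := hY
  exact ⟨g * h, by simp [mul_assoc]⟩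

theorem closure_conjOrbit_subset [CommRing K] [TopologicalSpace K] [IsTopologicalRing K]
    {X Y : Matrix ι ι K} (hY : Y ∈ closure (conjOrbit X)) :
    closure (conjOrbit Y) ⊆ closure (conjOrbit X) := by
  refine closure_minimal ?_ isClosed_closure
  rintro _ ⟨g, rfl⟩
  exact map_mem_closure (f := fun Z => (g : Matrix ι ι K) * Z * ((g⁻¹ : GL ι K) : Matrix ι ι K))
    (by fun_prop) hY fun Z hZ => conj_mem_conjOrbit hZ g

/-- If `P` is idempotent, commutes with `D` and satisfies `N * P = 0`, then conjugating by
`t • P + (1 - P)` and letting `t → 0` removes the component `P * N` of `N`. -/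
theorem add_one_sub_mul_mem_closure_conjOrbit [NontriviallyNormedField K]
    {D N P : Matrix ι ι K} (hP : IsIdempotentElem P) (hPD : Commute P D) (hNP : N * P = 0) :
    D + (1 - P) * N ∈ closure (conjOrbit (D + N)) := by
  have hlim : Tendsto (fun t : K => D + (t • P + (1 - P)) * N) (𝓝[≠] 0)
      (𝓝 (D + (1 - P) * N)) := by
    have hc : Continuous fun t : K => D + (t • P + (1 - P)) * N := by fun_prop
    simpa using (hc.tendsto 0).mono_left nhdsWithin_le_nhds
  refine mem_closure_of_tendsto hlim ?_
  filter_upwards [self_mem_nhdsWithin] with t ht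
  have hinv (a b : K) (hab : a * b = 1) : (a • P + (1 - P)) * (b • P + (1 - P)) = 1 := by
    simp [mul_add, add_mul, mul_sub, sub_mul, smul_smul, hP.eq, hab, mul_comm b a]
  refine ⟨⟨t • P + (1 - P), t⁻¹ • P + (1 - P), hinv _ _ (mul_inv_cancel₀ ht),
    hinv _ _ (inv_mul_cancel₀ ht)⟩, ?_⟩
  change _ = (t • P + (1 - P)) * (D + N) * (t⁻¹ • P + (1 - P))
  have hD : (t • P + (1 - P)) * D = D * (t • P + (1 - P)) :=
    ((hPD.smul_left t).add_left ((Commute.one_left D).sub_left hPD)).eq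
  have hN : N * (t⁻¹ • P + (1 - P)) = N := by simp [mul_add, mul_sub, hNP]
  rw [mul_add _ D N, add_mul (_ * D), hD, mul_assoc D, hinv _ _ (mul_inv_cancel₀ ht), mul_assoc _ N, hN, mul_one]

theorem diagonal_mem_closure_conjOrbit_of_pow_eq_zero [NontriviallyNormedField K] (d : ι → K)
    (k : ℕ) (N : Matrix ι ι K) (hk : N ^ (k + 1) = 0) (hN : Commute N (diagonal d)) :
    diagonal d ∈ closure (conjOrbit (diagonal d + N)) := by
  induction k generalizing N with
  | zero =>
    rw [zero_add, pow_one] at hk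
    exact subset_closure ⟨1, by simp [hk]⟩
  | succ k ih =>
    obtain ⟨P, hP, hPd, hNP, hker⟩ := exists_isIdempotentElem_commute_diagonal hN
    have hQ : N * (1 - P) = N := by rw [mul_sub, hNP, mul_one, sub_zero]
    have hpow (j : ℕ) : ((1 - P) * N) ^ (j + 1) = (1 - P) * N ^ (j + 1) := by
      induction j with
      | zero => simp
      | succ j hj =>
        rw [pow_succ, hj, pow_succ N j, pow_succ N (j + 1), pow_succ N j]
        simp only [mul_assoc]
        rw [← mul_assoc N (1 - P) N, hQ]
    refine closure_conjOrbit_subset (add_one_sub_mul_mem_closure_conjOrbit hP hPd hNP) (ih _ ?_ ?_)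
    · rw [hpow, sub_mul, one_mul, hker _ (by rw [← pow_succ', hk]), sub_self]
    · exact ((Commute.one_left _).sub_left hPd).mul_left hN

end Matrix


/-- Over a nontrivially normed field, if `γ` is a diagonal matrix and `N` is a nilpotent
matrix commuting with `γ`, then `γ` lies in the closure of the conjugation orbit of
`γ + N`. -/
theorem stmt_9 {F : Type*} [NontriviallyNormedField F] {n : ℕ}
    (d : Fin n → F) (N : Matrix (Fin n) (Fin n) F) (hN : IsNilpotent N)
    (hcomm : N * Matrix.diagonal d = Matrix.diagonal d * N) :
    Matrix.diagonal d ∈ closure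
      {X : Matrix (Fin n) (Fin n) F | ∃ g : GL (Fin n) F,
        X = (g : Matrix (Fin n) (Fin n) F) * (Matrix.diagonal d + N) *
          ((g⁻¹ : GL (Fin n) F) : Matrix (Fin n) (Fin n) F)} := by
  obtain ⟨k, hk⟩ := hN
  exact Matrix.diagonal_mem_closure_conjOrbit_of_pow_eq_zero d k N
    (by rw [pow_succ, hk, zero_mul]) hcomm
end
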